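/- Let 𝔤 be a Lie (super)algebra. If 𝔤 is equipped with a higher Poisson structure 𝒫 ∈ C^∞(Π𝔤*), then 𝔤* is canonically an L_∞-algebra. Similarly, if 𝔤 is equipped with a higher Schouten structure 𝒮 ∈ C^∞(𝔤*), then Π𝔤* is canonically an L_∞-algebra. -/

import Mathlib

/-!
Both halves are instances of one derived-bracket argument for a bracket of parity `ε`.  Measure
parities after a shift by `ε`, so that the bracket becomes a graded Lie bracket.  The structure `S`
is then odd and the higher structure `T` is even, so `H = [S, T]` is odd and `[H, ·]` is an odd
derivation of the product, which up to a nonzero constant is the vector field in question.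

For an odd element `K`, the Jacobi identity gives `[K, [K, x]] = ½ [[K, K], x]`
(`SuperBracket.br_br_eq_zero`).  Taking `K = S` and using `[S, S] = 0` shows `[S, H] = 0`, so
applying `[S, ·]` to the hypothesis `[H, T] = 0` leaves `[H, H] = 0`
(`SuperBracket.derived_self_eq_zero`).  Taking `K = H` then shows that the vector field squares
to zero.  The Jacobi identity and the parity rule concern homogeneous elements only; they extend to
all elements through the splitting of an element into its even and odd parts.
-/

noncomputable section


/-- The sign `(-1)^p` attached to a parity `p ∈ ℤ₂`. -/
def pSign (p : ZMod 2) : ℝ := if p = 0 then 1 else -1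

/-- `a` is homogeneous of Grassmann parity `p` with respect to the parity involution `σ`. -/
def IsHomog {A : Type*} [Ring A] [Algebra ℝ A] (σ : A →ₐ[ℝ] A) (p : ZMod 2) (a : A) : Prop :=
  σ a = pSign p • a

/-- An (even, `ε = 0`, Poisson) or (odd, `ε = 1`, Schouten) super bracket on a
supercommutative algebra `A` whose parity is encoded by the involution `σ`. -/
structure SuperBracket (A : Type*) [Ring A] [Algebra ℝ A] (σ : A →ₐ[ℝ] A) (ε : ZMod 2) where
  br : A → A → A
  add_left : ∀ a b c, br (a + b) c = br a c + br b c
  add_right : ∀ a b c, br a (b + c) = br a b + br a c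
  smul_left : ∀ (t : ℝ) (a b : A), br (t • a) b = t • br a b
  smul_right : ∀ (t : ℝ) (a b : A), br a (t • b) = t • br a b
  parity : ∀ (p q : ZMod 2) (a b : A), IsHomog σ p a → IsHomog σ q b →
    IsHomog σ (p + q + ε) (br a b)
  symm : ∀ (p q : ZMod 2) (a b : A), IsHomog σ p a → IsHomog σ q b →
    br a b = -(pSign ((p + ε) * (q + ε)) • br b a)
  leibniz : ∀ (p q : ZMod 2) (a b c : A), IsHomog σ p a → IsHomog σ q b →
    br a (b * c) = br a b * c + pSign ((p + ε) * q) • (b * br a c)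
  jacobi : ∀ (p q r : ZMod 2) (a b c : A), IsHomog σ p a → IsHomog σ q b → IsHomog σ r c →
    pSign ((p + ε) * (r + ε)) • br a (br b c)
      + pSign ((q + ε) * (p + ε)) • br b (br c a)
      + pSign ((r + ε) * (q + ε)) • br c (br a b) = 0

lemma pSign_zero : pSign 0 = 1 := if_pos rfl

lemma pSign_one : pSign 1 = -1 := if_neg one_ne_zero

lemma pSign_ne_zero (p : ZMod 2) : pSign p ≠ 0 := by
  unfold pSign
  split_ifs <;> norm_num

lemma pSign_add_one (p : ZMod 2) : pSign (p + 1) = -pSign p := by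
  fin_cases p
  · change pSign 1 = -pSign 0
    rw [pSign_zero, pSign_one]
  · change pSign 0 = -pSign 1
    rw [pSign_zero, pSign_one, neg_neg]

/-- The even and odd parts are `(a ± σ a) / 2`. -/
lemma exists_homog_decomp {A : Type*} [Ring A] [Algebra ℝ A] (σ : A →ₐ[ℝ] A)
    (hσ : ∀ a, σ (σ a) = a) (a : A) :
    ∃ a₀ a₁ : A, IsHomog σ 0 a₀ ∧ IsHomog σ 1 a₁ ∧ a = a₀ + a₁ := by
  refine ⟨(1 / 2 : ℝ) • (a + σ a), (1 / 2 : ℝ) • (a - σ a), ?_, ?_, ?_⟩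
  · simp only [IsHomog, pSign_zero, map_smul, map_add, hσ]
    module
  · simp only [IsHomog, pSign_one, map_smul, map_sub, hσ]
    module
  · module

namespace SuperBracket

variable {A : Type*} [Ring A] [Algebra ℝ A] {σ : A →ₐ[ℝ] A} {ε : ZMod 2}

lemma br_zero (β : SuperBracket A σ ε) (a : A) : β.br a 0 = 0 := by
  simpa using β.smul_right 0 a 0

/-- An element that is odd after the shift by `ε` and has vanishing self-bracket acts with square
zero. -/
lemma br_br_eq_zero (β : SuperBracket A σ ε) (hσ : ∀ a, σ (σ a) = a) {K : A}
    (hK : IsHomog σ (1 + ε) K) (hKK : β.br K K = 0) (x : A) : β.br K (β.br K x) = 0 := by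
  have hε : 1 + ε + ε = 1 := by rw [add_assoc, CharTwo.add_self_eq_zero, add_zero]
  have key : ∀ (q : ZMod 2) (y : A), IsHomog σ q y → β.br K (β.br K y) = 0 := by
    intro q y hy
    have hJ := β.jacobi _ _ _ K K y hK hK hy
    rw [β.symm _ _ y K hy hK, hKK, br_zero, ← neg_smul, β.smul_right, hε] at hJ
    simp only [mul_one, one_mul, pSign_one, smul_zero, add_zero] at hJ
    -- the first two terms of the Jacobi identity coincide
    have h2 : (2 * pSign (q + ε)) • β.br K (β.br K y) = 0 := by
      rw [← hJ]
      module
    exact (smul_eq_zero.mp h2).resolve_left (mul_ne_zero two_ne_zero (pSign_ne_zero _))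
  obtain ⟨x₀, x₁, h₀, h₁, rfl⟩ := exists_homog_decomp σ hσ x
  rw [β.add_right, β.add_right, key _ _ h₀, key _ _ h₁, add_zero]

/-- The derived bracket's master equation `[[S, T], T] = 0` implies `[H, H] = 0` for
`H = [S, T]`. -/
lemma derived_self_eq_zero (β : SuperBracket A σ ε) (hσ : ∀ a, σ (σ a) = a) {S T : A}
    (hS : IsHomog σ (1 + ε) S) (hT : IsHomog σ ε T) (hH : IsHomog σ (1 + ε) (β.br S T))
    (hSS : β.br S S = 0) (hTT : β.br (β.br S T) T = 0) :
    β.br (β.br S T) (β.br S T) = 0 := by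
  have hε : 1 + ε + ε = 1 := by rw [add_assoc, CharTwo.add_self_eq_zero, add_zero]
  have hJ := β.jacobi _ _ _ S (β.br S T) T hS hH hT
  rw [hTT, br_zero, β.br_br_eq_zero hσ hS hSS, br_zero, β.symm _ _ T S hT hS, ← neg_smul,
    β.smul_right, hε, CharTwo.add_self_eq_zero] at hJ
  simpa [pSign_zero, pSign_one] using hJ

end SuperBracket

/-- The common form of both halves: the derived bracket with a solution `T` of the master equation,
here the operator `D`, is an odd derivation with square zero. -/
lemma derived_homological {A B : Type*} [Ring A] [Algebra ℝ A] [Ring B] [Algebra ℝ B]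
    {σA : A →ₐ[ℝ] A} {σB : B →ₐ[ℝ] B} {ε : ZMod 2}
    (hσA : ∀ a, σA (σA a) = a) (hσB : ∀ b, σB (σB b) = b) (β : SuperBracket A σA ε)
    (ι : B →ₐ[ℝ] A) (hι : Function.Injective ι) (hισ : ∀ b, ι (σB b) = σA (ι b))
    {S : A} (hS : IsHomog σA (1 + ε) S) (hSS : β.br S S = 0)
    {T : B} (hT : IsHomog σB ε T) (D : B → B) {c : ℝ} (hc : c ≠ 0)
    (hD : ∀ X, ι (D X) = c • β.br (β.br S (ι T)) (ι X)) (hDT : D T = 0) :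
    (∀ X Y : B, D (X + Y) = D X + D Y) ∧
    (∀ (q : ZMod 2) (X Y : B), IsHomog σB q X →
      D (X * Y) = D X * Y + pSign q • (X * D Y)) ∧
    (∀ X : B, σB (D X) = -(D (σB X))) ∧
    (∀ X : B, D (D X) = 0) := by
  have hε : 1 + ε + ε = 1 := by rw [add_assoc, CharTwo.add_self_eq_zero, add_zero]
  have hom : ∀ {q : ZMod 2} {X : B}, IsHomog σB q X → IsHomog σA q (ι X) := by
    intro q X hX
    unfold IsHomog at hX ⊢
    rw [← hισ, hX, map_smul]
  have hH : IsHomog σA (1 + ε) (β.br S (ι T)) := by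
    have h := β.parity _ _ _ _ hS (hom hT)
    rwa [add_assoc, add_assoc, CharTwo.add_self_eq_zero, add_zero] at h
  have hHT : β.br (β.br S (ι T)) (ι T) = 0 := by
    have h := hD T
    rw [hDT, map_zero] at h
    exact (smul_eq_zero.mp h.symm).resolve_left hc
  have hHH := β.derived_self_eq_zero hσA hS (hom hT) hH hSS hHT
  have hadd : ∀ X Y : B, D (X + Y) = D X + D Y := by
    intro X Y
    apply hι
    rw [hD, map_add, map_add, hD, hD, β.add_right, smul_add]
  have hodd : ∀ (q : ZMod 2) (X : B), IsHomog σB q X → σB (D X) = -(D (σB X)) := by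
    intro q X hX
    apply hι
    have h := β.parity _ _ _ _ hH (hom hX)
    have hq : 1 + ε + q + ε = q + 1 := by
      rw [add_right_comm, hε, add_comm]
    rw [hq, IsHomog, pSign_add_one] at h
    have hX' : σB X = pSign q • X := hX
    rw [hισ, hD, map_smul, h, map_neg, hD, hX', map_smul, β.smul_right]
    module
  refine ⟨hadd, ?_, ?_, ?_⟩
  · intro q X Y hX
    apply hι
    rw [hD, map_mul, β.leibniz _ _ _ _ _ hH (hom hX), hε, one_mul, map_add, map_mul, map_smul,
      map_mul, hD, hD, smul_add, smul_mul_assoc, mul_smul_comm, smul_comm c]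
  · intro X
    obtain ⟨X₀, X₁, h₀, h₁, rfl⟩ := exists_homog_decomp σB hσB X
    rw [hadd, map_add, map_add, hadd, hodd _ _ h₀, hodd _ _ h₁, neg_add]
  · intro X
    apply hι
    rw [hD, hD, β.smul_right, β.br_br_eq_zero hσA hH hHH, smul_zero, smul_zero, map_zero]

/-- Let `𝔤` be a Lie (super)algebra.  If `𝔤` is equipped with a higher
Poisson structure `𝒫 ∈ C^∞(Π𝔤*)`, then `𝔤*` is canonically an `L_∞`-algebra.  Similarly,
if `𝔤` is equipped with a higher Schouten structure `𝒮 ∈ C^∞(𝔤*)`, then `Π𝔤*` is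
canonically an `L_∞`-algebra.

Model (a Lie algebra is a Lie algebroid over a point):  `A = C^∞(T*(Π𝔤*))` carries the
canonical Poisson bracket `pbA` and the odd function `S` (the Lie–Schouten structure
`S = (1/2!)(-1)^{α̃+β̃} π^α π^β Q_{βα}^γ η_γ`) with `{S,S} = 0`; it induces the derived
Lie–Schouten bracket `sb` on `B = C^∞(Π𝔤*)`.  Dually, `A' = C^∞(ΠT*(𝔤*))` carries the
canonical Schouten bracket `sbrA` and the even function `P` (the Poisson–Lie structure
`P = -(1/2) e^α_* e^β_* Q_{βα}^γ e_γ`) with `⟦P,P⟧ = 0`, inducing the derived Poisson–Lie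
bracket `pb` on `C = C^∞(𝔤*)`.  A higher Poisson structure on `𝔤` is an even `𝒫 ∈ B`
with `⟦𝒫,𝒫⟧_S = 0`; a higher Schouten structure is an odd `𝒮 ∈ C` with `{𝒮,𝒮}_P = 0`.
An `L_∞`-algebra structure on a superspace `V` is equivalent to a (formal) homological
vector field on `V`: the conclusion exhibits the canonical homological vector fields
`Q_𝒫 = -⟦𝒫,·⟧_S` on `Π(𝔤*)`, giving the `L_∞`-algebra structure on `𝔤*`, and
`Q_𝒮 = {𝒮,·}_P` on `Π(Π𝔤*) = 𝔤*`, giving the `L_∞`-algebra structure on `Π𝔤*`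
(odd super-derivations squaring to zero). -/
theorem lie_algebra_higher_structures_give_Linfty_algebras
    (A B A' C : Type*) [Ring A] [Algebra ℝ A] [Ring B] [Algebra ℝ B]
    [Ring A'] [Algebra ℝ A'] [Ring C] [Algebra ℝ C]
    (σA : A →ₐ[ℝ] A) (σB : B →ₐ[ℝ] B) (σA' : A' →ₐ[ℝ] A') (σC : C →ₐ[ℝ] C)
    (hσA : ∀ a, σA (σA a) = a) (hσB : ∀ b, σB (σB b) = b)
    (hσA' : ∀ a, σA' (σA' a) = a) (hσC : ∀ c, σC (σC c) = c)
    -- the canonical Poisson bracket on C^∞(T*(Π𝔤*))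
    (pbA : SuperBracket A σA 0)
    (ι : B →ₐ[ℝ] A) (hι : Function.Injective ι) (hισ : ∀ b, ι (σB b) = σA (ι b))
    -- the weight minus one Lie–Schouten structure S encoding the Lie algebra 𝔤
    (S : A) (hSodd : IsHomog σA 1 S) (hmasterS : pbA.br S S = 0)
    -- the derived (Lie–Schouten) bracket on C^∞(Π𝔤*)
    (sb : B → B → B)
    (hsb : ∀ (q : ZMod 2) (X Y : B), IsHomog σB q X →
      ι (sb X Y) = (-(pSign q)) • pbA.br (pbA.br S (ι X)) (ι Y))
    -- the canonical Schouten bracket on C^∞(ΠT*(𝔤*))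
    (sbrA : SuperBracket A' σA' 1)
    (ι' : C →ₐ[ℝ] A') (hι' : Function.Injective ι') (hι'σ : ∀ c, ι' (σC c) = σA' (ι' c))
    -- the weight minus one Poisson–Lie structure P encoding the Lie algebra 𝔤
    (P : A') (hPeven : IsHomog σA' 0 P) (hmasterP : sbrA.br P P = 0)
    -- the derived (Poisson–Lie) bracket on C^∞(𝔤*)
    (pb : C → C → C)
    (hpb : ∀ (q : ZMod 2) (F G : C), IsHomog σC q F →
      ι' (pb F G) = (-(pSign q)) • sbrA.br (sbrA.br P (ι' F)) (ι' G)) :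
    -- (1) a higher Poisson structure 𝒫 on 𝔤 makes 𝔤* canonically an L_∞-algebra:
    --     Q_𝒫 = -⟦𝒫,·⟧_S is a homological vector field on Π(𝔤*)
    (∀ hP : B, IsHomog σB 0 hP → sb hP hP = 0 →
      (∀ X Y : B, sb hP (X + Y) = sb hP X + sb hP Y) ∧
      (∀ (q : ZMod 2) (X Y : B), IsHomog σB q X →
        sb hP (X * Y) = sb hP X * Y + pSign q • (X * sb hP Y)) ∧
      (∀ X : B, σB (sb hP X) = -(sb hP (σB X))) ∧
      (∀ X : B, sb hP (sb hP X) = 0)) ∧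
    -- (2) a higher Schouten structure 𝒮 on 𝔤 makes Π𝔤* canonically an L_∞-algebra:
    --     Q_𝒮 = {𝒮,·}_P is a homological vector field on Π(Π𝔤*) = 𝔤*
    (∀ hS : C, IsHomog σC 1 hS → pb hS hS = 0 →
      (∀ X Y : C, pb hS (X + Y) = pb hS X + pb hS Y) ∧
      (∀ (q : ZMod 2) (X Y : C), IsHomog σC q X →
        pb hS (X * Y) = pb hS X * Y + pSign q • (X * pb hS Y)) ∧
      (∀ X : C, σC (pb hS X) = -(pb hS (σC X))) ∧
      (∀ X : C, pb hS (pb hS X) = 0)) := by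
  refine ⟨fun T hT hTT => ?_, fun T hT hTT => ?_⟩
  · exact derived_homological hσA hσB pbA ι hι hισ (by simpa using hSodd) hmasterS hT (sb T)
      (neg_ne_zero.mpr (pSign_ne_zero 0)) (fun X => hsb 0 T X hT) hTT
  · exact derived_homological hσA' hσC sbrA ι' hι' hι'σ
      (by rwa [CharTwo.add_self_eq_zero]) hmasterP hT (pb T)
      (neg_ne_zero.mpr (pSign_ne_zero 1)) (fun X => hpb 1 T X hT) hTT

end
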